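/- Let T be a scalar Calderón–Zygmund operator on ℝ^d with modulus of continuity ω satisfying the Dini condition, let ρ ∈ (2,∞), assume V_ρ(T_*) is bounded on L^q(ℝ^d) for some q ∈ (1,∞), and let r ∈ (1, min{q,ρ}). Fix a cube Q₀, a point x ∈ Q₀, a cube Q with x ∈ Q ⊂ Q₀, and let B_x := B(x, 9d·ℓ(Q)). Then for every ξ ∈ Q and every f ∈ L^q(ℝ^d), |V_ρ(T_*(f χ_{3Q₀∖B_x}))(ξ) − V_ρ(T_*(f χ_{3Q₀∖B_x}))(x)| ≤ C [M(|f|^r)(x)]^{1/r}, where M is the Hardy–Littlewood maximal operator over cubes and C is independent of Q₀, Q, x, ξ and f. -/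

import Mathlib

open MeasureTheory Set Filter Classical
open scoped ENNReal
noncomputable section

abbrev Rd (d : ℕ) := EuclideanSpace ℝ (Fin d)

/-- An axis-parallel (half-open) cube in `ℝ^d`, given by its center and side length. -/
structure Cube (d : ℕ) where
  c : Fin d → ℝ
  l : ℝ
  hl : 0 < l

/-- The underlying (half-open) set of a cube. -/
def Cube.set {d : ℕ} (Q : Cube d) : Set (Rd d) :=
  {y | ∀ i, Q.c i - Q.l / 2 ≤ y i ∧ y i < Q.c i + Q.l / 2}

/-- The (half-open) set `tQ`, the cube concentric with `Q` of side length `t·ℓ(Q)`. -/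
def Cube.dilate {d : ℕ} (Q : Cube d) (t : ℝ) : Set (Rd d) :=
  {y | ∀ i, Q.c i - t * Q.l / 2 ≤ y i ∧ y i < Q.c i + t * Q.l / 2}

/-- The volume `|Q| = ℓ(Q)^d` of a cube, as an extended nonnegative real. -/
def Cube.vol {d : ℕ} (Q : Cube d) : ℝ≥0∞ := ENNReal.ofReal (Q.l ^ d)

/-- `Q` is one of the dyadic subcubes of `Q₀` obtained by repeated subdivision of `Q₀`
into `2^d` congruent subcubes. -/
def IsDyadicSubcube {d : ℕ} (Q₀ Q : Cube d) : Prop :=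
  ∃ (k : ℕ) (m : Fin d → ℕ), (∀ i, m i < 2 ^ k) ∧ Q.l = Q₀.l / 2 ^ k ∧
    ∀ i, Q.c i = Q₀.c i - Q₀.l / 2 + ((m i : ℝ) + 1 / 2) * (Q₀.l / 2 ^ k)
/-- A scalar Calderón–Zygmund operator on `ℝ^d` with Dini modulus of continuity:
a linear operator `T` bounded on `L²(ℝ^d)` associated with a kernel `K` satisfying the
size condition and the `ω`-smoothness condition, where `ω` is increasing, subadditive,
vanishes at `0`, and satisfies the Dini condition `∫₀¹ ω(t) dt/t < ∞`. -/
structure CZO (d : ℕ) where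
  K : Rd d → Rd d → ℝ
  measK : Measurable (Function.uncurry K)
  ω : ℝ → ℝ
  Cst : ℝ
  hCst : 0 < Cst
  ω_mono : MonotoneOn ω (Set.Ici 0)
  ω_zero : ω 0 = 0
  ω_subadd : ∀ s t : ℝ, 0 ≤ s → 0 ≤ t → ω (s + t) ≤ ω s + ω t
  dini : IntegrableOn (fun t => ω t / t) (Set.Ioo (0 : ℝ) 1)
  size : ∀ x y : Rd d, x ≠ y → |K x y| ≤ Cst / dist x y ^ d
  smooth : ∀ x x' y : Rd d, x ≠ y → dist x x' ≤ dist x y / 2 →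
    |K x y - K x' y| + |K y x - K y x'| ≤ Cst * ω (dist x x' / dist x y) / dist x y ^ d
  T : Lp ℝ 2 (volume : Measure (Rd d)) →L[ℝ] Lp ℝ 2 (volume : Measure (Rd d))
  assoc : ∀ f : Lp ℝ 2 (volume : Measure (Rd d)),
    ∀ᵐ x ∂(volume : Measure (Rd d)), x ∉ tsupport (f : Rd d → ℝ) →
      (T f : Rd d → ℝ) x = ∫ y, K x y * f y

/-- The truncated singular integral `T_ε f(x) = ∫_{|x-y|>ε} K(x,y) f(y) dy`. -/
def CZO.trunc {d : ℕ} (S : CZO d) (ε : ℝ) (f : Rd d → ℝ) (x : Rd d) : ℝ :=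
  ∫ y in {y : Rd d | ε < dist x y}, S.K x y * f y

/-- The variation operator `V_ρ(T_* f)(x)`, with values in `[0,∞]`: the supremum over all
strictly decreasing positive sequences `ε_i → 0` of `(Σ_i |T_{ε_{i+1}}f(x) - T_{ε_i}f(x)|^ρ)^{1/ρ}`. -/
def CZO.var {d : ℕ} (S : CZO d) (ρ : ℝ) (f : Rd d → ℝ) (x : Rd d) : ℝ≥0∞ :=
  ⨆ (ε : ℕ → ℝ) (_ : StrictAnti ε ∧ (∀ i, 0 < ε i) ∧ Tendsto ε atTop (nhds 0)),
    (∑' i : ℕ, ENNReal.ofReal |S.trunc (ε (i + 1)) f x - S.trunc (ε i) f x| ^ ρ) ^ (1 / ρ)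

/-- `V_ρ(T_*)` is bounded on `L^q(ℝ^d)`. -/
def CZO.VarBdd {d : ℕ} (S : CZO d) (ρ q : ℝ) : Prop :=
  ∃ A : ℝ, 0 < A ∧ ∀ f : Rd d → ℝ, Measurable f →
    ∫⁻ x, S.var ρ f x ^ q ∂volume ≤ ENNReal.ofReal A * ∫⁻ x, ENNReal.ofReal |f x| ^ q ∂volume

/-- The weak `(1,1)` operator (quasi-)norm `‖V_ρ(T_*)‖_{L¹ → L^{1,∞}}`. -/
def CZO.weak11Norm {d : ℕ} (S : CZO d) (ρ : ℝ) : ℝ≥0∞ :=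
  sInf {A : ℝ≥0∞ | ∀ f : Rd d → ℝ, Measurable f → ∀ t : ℝ, 0 < t →
    ENNReal.ofReal t * volume {x | ENNReal.ofReal t < S.var ρ f x} ≤
      A * ∫⁻ x, ENNReal.ofReal |f x| ∂volume}

/-- The local grand maximal truncated operator `M_{V_ρ(T_*),Q₀}`. -/
def CZO.grandMaxLoc {d : ℕ} (S : CZO d) (ρ : ℝ) (Q₀ : Cube d) (f : Rd d → ℝ) (x : Rd d) : ℝ≥0∞ :=
  if x ∈ Q₀.set then
    ⨆ (Q : Cube d) (_ : x ∈ Q.set ∧ Q.set ⊆ Q₀.set),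
      essSup (fun ξ => S.var ρ ((Q₀.dilate 3 \ Q.dilate 3).indicator f) ξ)
        (volume.restrict Q.set)
  else 0

/-- The (global) grand maximal truncated operator `M_{V_ρ(T_*)}`. -/
def CZO.grandMax {d : ℕ} (S : CZO d) (ρ : ℝ) (f : Rd d → ℝ) (x : Rd d) : ℝ≥0∞ :=
  ⨆ (Q : Cube d) (_ : x ∈ Q.set),
    essSup (fun ξ => S.var ρ (((Q.dilate 3)ᶜ).indicator f) ξ) (volume.restrict Q.set)

/-- The Hardy–Littlewood maximal operator over cubes, with values in `[0,∞]`. -/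
def maxCube {d : ℕ} (f : Rd d → ℝ) (x : Rd d) : ℝ≥0∞ :=
  ⨆ (Q : Cube d) (_ : x ∈ Q.set), Q.vol⁻¹ * ∫⁻ y in Q.set, ENNReal.ofReal |f y|

/-- The average `⟨|f|⟩_{3Q} = (1/|3Q|) ∫_{3Q} |f|`. -/
def avg3 {d : ℕ} (Q : Cube d) (f : Rd d → ℝ) : ℝ :=
  (∫ y in Q.dilate 3, |f y|) / (3 * Q.l) ^ d
/-- The Euclidean norm of a vector in `ℝ^n`. -/
def enorm' {n : ℕ} (v : Fin n → ℝ) : ℝ := Real.sqrt (∑ i, v i ^ 2)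

/-- The operator norm (with respect to Euclidean norms) of an `n × n` real matrix. -/
def matOpNorm {n : ℕ} (A : Matrix (Fin n) (Fin n) ℝ) : ℝ :=
  sSup ((fun v => enorm' (A.mulVec v)) '' {v | enorm' v ≤ 1})

/-- The spectral power `A^s` of a symmetric matrix `A = U D Uᵗ`, defined as `U D^s Uᵗ`
(junk value `A` if `A` is not symmetric). -/
def Matrix.rpowH {n : ℕ} (A : Matrix (Fin n) (Fin n) ℝ) (s : ℝ) : Matrix (Fin n) (Fin n) ℝ :=
  if h : A.IsHermitian then
    (h.eigenvectorUnitary : Matrix (Fin n) (Fin n) ℝ) *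
      Matrix.diagonal (fun i => h.eigenvalues i ^ s) *
      star (h.eigenvectorUnitary : Matrix (Fin n) (Fin n) ℝ)
  else A

/-- A matrix weight on `ℝ^d`: a measurable function with a.e. symmetric positive definite
values whose operator norm is locally integrable. -/
structure MatrixWeight (d n : ℕ) where
  W : Rd d → Matrix (Fin n) (Fin n) ℝ
  meas : ∀ i j, Measurable fun x => W x i j
  pd : ∀ᵐ x : Rd d, (W x).PosDef
  locInt : LocallyIntegrable (fun x => matOpNorm (W x)) (volume : Measure (Rd d))

/-- The matrix `A_p` characteristic `[W]_{A_p}`. -/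
def MatrixWeight.apConst {d n : ℕ} (W : MatrixWeight d n) (p : ℝ) : ℝ≥0∞ :=
  ⨆ Q : Cube d, Q.vol⁻¹ * ∫⁻ x in Q.set,
    (Q.vol⁻¹ * ∫⁻ t in Q.set,
        ENNReal.ofReal (matOpNorm ((W.W x).rpowH (1 / p) * (W.W t).rpowH (-(1 / p))))
          ^ (p / (p - 1))) ^ (p - 1)

/-- The norm of `f` in `L^p(W)`. -/
def MatrixWeight.wNorm {d n : ℕ} (W : MatrixWeight d n) (p : ℝ)
    (f : Rd d → Fin n → ℝ) : ℝ≥0∞ :=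
  (∫⁻ x, ENNReal.ofReal (enorm' (((W.W x).rpowH (1 / p)).mulVec (f x))) ^ p) ^ (1 / p)

/-- The Euclidean length `|V_ρ(T_{n,*} f⃗)(x)|` of the componentwise variation vector
(with values in `[0,∞]`). -/
def CZO.varVecNorm {d : ℕ} (n : ℕ) (S : CZO d) (ρ : ℝ) (f : Rd d → Fin n → ℝ)
    (x : Rd d) : ℝ≥0∞ :=
  (∑ j : Fin n, S.var ρ (fun y => f y j) x ^ (2 : ℝ)) ^ ((1 : ℝ) / 2)

/-- An `η`-sparse family of cubes. -/
def IsSparse {d : ℕ} (η : ℝ) (F : Set (Cube d)) : Prop :=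
  ∃ E : Cube d → Set (Rd d),
    (∀ Q ∈ F, E Q ⊆ Q.set ∧ MeasurableSet (E Q) ∧ ENNReal.ofReal η * Q.vol ≤ volume (E Q)) ∧
    F.PairwiseDisjoint E

/-- The convex body average `⟨⟨f⃗⟩⟩_{tQ}` of a vector-valued function over the cube `tQ`. -/
def convexBodyAvg {d n : ℕ} (f : Rd d → Fin n → ℝ) (Q : Cube d) (t : ℝ) :
    Set (Fin n → ℝ) :=
  {v | ∃ φ : Rd d → ℝ, Measurable φ ∧ (∀ y, |φ y| ≤ 1) ∧
    ∀ j, v j = (∫ y in Q.dilate t, φ y * f y j) / (t * Q.l) ^ d}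

/-!
The increments of the truncations at `z` are integrals of `K(z, ·) g` over the annuli
`ε_{i+1} < |z - y| ≤ ε_i`. Let `g` vanish on `B(x, R)` and let `|x - ξ| ≤ R / 2`. The difference of
the `i`-th increments at `ξ` and at `x` is the integral of `(K(ξ, ·) - K(x, ·)) g` over one annulus,
plus an integral of `K(x, ·) g` over the symmetric difference of two annuli. The first terms are
summable: the annuli are disjoint, and the smoothness of `K` on the dyadic shells
`2 ^ k R ≤ |x - y| < 2 ^ (k + 1) R` yields the Dini series `∑ ω(2 ^ (-k))`. In the second, each
symmetric difference lies in two shells around `x` of thickness `R`, so Hölder's inequality with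
respect to `|x - y| ^ (1 - d) dy`, the measure that is uniform in the radius, gains a factor
`(R / |x - y|) ^ (r - 1)`. Hence the `r`-th powers of the second terms are summable, and `r ≤ ρ`
gives `ℓ^r ⊆ ℓ^ρ`. Both sums are controlled by the averages of `|g| ^ r` over balls around `x`.
-/

section Sums

variable {ι : Type*}

theorem tsum_add_rpow_le {p : ℝ} (hp : 1 ≤ p) (a b : ι → ℝ≥0∞) :
    (∑' i, (a i + b i) ^ p) ^ (1 / p) ≤
      (∑' i, a i ^ p) ^ (1 / p) + (∑' i, b i ^ p) ^ (1 / p) := by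
  let _ : MeasurableSpace ι := ⊤
  simpa only [lintegral_count, Pi.add_apply] using
    ENNReal.lintegral_Lp_add_le (μ := Measure.count) (f := a) (g := b)
      measurable_from_top.aemeasurable measurable_from_top.aemeasurable hp

theorem tsum_rpow_rpow_antitone {p q : ℝ} (hp : 0 < p) (hpq : p ≤ q) (b : ι → ℝ≥0∞) :
    (∑' i, b i ^ q) ^ (1 / q) ≤ (∑' i, b i ^ p) ^ (1 / p) := by
  have hq : 0 < q := hp.trans_le hpq
  set s : ℝ≥0∞ := (∑' i, b i ^ p) ^ (1 / p)
  have hsp : s ^ p = ∑' i, b i ^ p := by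
    rw [← ENNReal.rpow_mul, one_div_mul_cancel hp.ne', ENNReal.rpow_one]
  have hb (i : ι) : b i ≤ s := (ENNReal.rpow_le_rpow_iff hp).1 (hsp ▸ ENNReal.le_tsum i)
  have rpow_split (t : ℝ≥0∞) : t ^ q = t ^ p * t ^ (q - p) := by
    rw [← ENNReal.rpow_add_of_nonneg _ _ hp.le (sub_nonneg.2 hpq), add_sub_cancel]
  have hsum : ∑' i, b i ^ q ≤ s ^ q :=
    calc ∑' i, b i ^ q ≤ ∑' i, b i ^ p * s ^ (q - p) := by
          refine ENNReal.tsum_le_tsum fun i ↦ ?_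
          rw [rpow_split]
          gcongr
          exact hb i
      _ = s ^ q := by rw [ENNReal.tsum_mul_right, ← hsp, rpow_split s]
  calc (∑' i, b i ^ q) ^ (1 / q) ≤ (s ^ q) ^ (1 / q) := by gcongr
    _ = s := by rw [← ENNReal.rpow_mul, mul_one_div_cancel hq.ne', ENNReal.rpow_one]

end Sums

section Integrals

variable {α : Type*} [MeasurableSpace α] {μ : Measure α}

theorem lintegral_rpow_le_mul_measure_univ {r : ℝ} (hr : 1 ≤ r) {H : α → ℝ≥0∞}
    (hH : AEMeasurable H μ) :
    (∫⁻ y, H y ∂μ) ^ r ≤ (∫⁻ y, H y ^ r ∂μ) * μ univ ^ (r - 1) := by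
  have hr0 : 0 < r := one_pos.trans_le hr
  have holder := eLpNorm'_le_eLpNorm'_mul_rpow_measure_univ one_pos hr hH.aestronglyMeasurable
  simp only [eLpNorm', enorm_eq_self, ENNReal.rpow_one, div_one] at holder
  calc (∫⁻ y, H y ∂μ) ^ r
      ≤ ((∫⁻ y, H y ^ r ∂μ) ^ (1 / r) * μ univ ^ (1 - 1 / r)) ^ r := by gcongr
    _ = (∫⁻ y, H y ^ r ∂μ) * μ univ ^ (r - 1) := by
        rw [ENNReal.mul_rpow_of_nonneg _ _ hr0.le, ← ENNReal.rpow_mul, ← ENNReal.rpow_mul,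
          one_div_mul_cancel hr0.ne', ENNReal.rpow_one, sub_mul, one_mul,
          one_div_mul_cancel hr0.ne']

theorem lintegral_mul_rpow_le {r : ℝ} (hr : 1 ≤ r) {H v : α → ℝ≥0∞}
    (hH : Measurable H) (hv : Measurable v) :
    (∫⁻ y, H y * v y ∂μ) ^ r ≤ (∫⁻ y, H y ^ r * v y ∂μ) * (∫⁻ y, v y ∂μ) ^ (r - 1) := by
  have jensen := lintegral_rpow_le_mul_measure_univ (μ := μ.withDensity v) hr hH.aemeasurable
  rw [lintegral_withDensity_eq_lintegral_mul μ hv hH,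
    lintegral_withDensity_eq_lintegral_mul μ hv (hH.pow_const r),
    withDensity_apply v MeasurableSet.univ, Measure.restrict_univ] at jensen
  simpa only [Pi.mul_apply, mul_comm (v _)] using jensen

theorem tsum_setLIntegral_le_lintegral {ι : Type*} [Countable ι] {U : ι → Set α}
    (hU : ∀ i, MeasurableSet (U i)) (hUd : Pairwise (Function.onFun Disjoint U)) (F : α → ℝ≥0∞) :
    ∑' i, ∫⁻ y in U i, F y ∂μ ≤ ∫⁻ y, F y ∂μ := by
  rw [← lintegral_iUnion hU hUd]
  exact setLIntegral_le_lintegral _ _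

theorem tsum_setLIntegral_symmDiff_le {ι : Type*} [Countable ι] {U V : ι → Set α}
    (hU : ∀ i, MeasurableSet (U i)) (hUd : Pairwise (Function.onFun Disjoint U))
    (hV : ∀ i, MeasurableSet (V i)) (hVd : Pairwise (Function.onFun Disjoint V))
    (F : α → ℝ≥0∞) :
    ∑' i, ∫⁻ y in symmDiff (U i) (V i), F y ∂μ ≤ 2 * ∫⁻ y, F y ∂μ :=
  calc ∑' i, ∫⁻ y in symmDiff (U i) (V i), F y ∂μ
      ≤ ∑' i, (∫⁻ y in U i, F y ∂μ + ∫⁻ y in V i, F y ∂μ) :=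
        ENNReal.tsum_le_tsum fun _ ↦
          (lintegral_mono_set symmDiff_le_sup).trans (lintegral_union_le _ _ _)
    _ = ∑' i, ∫⁻ y in U i, F y ∂μ + ∑' i, ∫⁻ y in V i, F y ∂μ := ENNReal.tsum_add
    _ ≤ ∫⁻ y, F y ∂μ + ∫⁻ y, F y ∂μ :=
        add_le_add (tsum_setLIntegral_le_lintegral hU hUd F)
          (tsum_setLIntegral_le_lintegral hV hVd F)
    _ = 2 * ∫⁻ y, F y ∂μ := (two_mul _).symm

variable {G : Type*} [NormedAddCommGroup G] [NormedSpace ℝ G]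

theorem enorm_setIntegral_sub_setIntegral_le {F : α → G} (hF : Integrable F μ) {U V : Set α}
    (hU : MeasurableSet U) (hV : MeasurableSet V) :
    ‖∫ y in U, F y ∂μ - ∫ y in V, F y ∂μ‖ₑ ≤ ∫⁻ y in symmDiff U V, ‖F y‖ₑ ∂μ := by
  have hdiff : ∫ y in U, F y ∂μ - ∫ y in V, F y ∂μ =
      ∫ y in U \ V, F y ∂μ - ∫ y in V \ U, F y ∂μ := by
    rw [← integral_inter_add_sdiff hV hF.integrableOn,
      ← integral_inter_add_sdiff hU (hF.integrableOn (s := V)), inter_comm V U,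
      add_sub_add_left_eq_sub]
  calc ‖∫ y in U, F y ∂μ - ∫ y in V, F y ∂μ‖ₑ
      ≤ ‖∫ y in U \ V, F y ∂μ‖ₑ + ‖∫ y in V \ U, F y ∂μ‖ₑ := hdiff ▸ enorm_sub_le
    _ ≤ ∫⁻ y in U \ V, ‖F y‖ₑ ∂μ + ∫⁻ y in V \ U, ‖F y‖ₑ ∂μ :=
        add_le_add (enorm_integral_le_lintegral_enorm _) (enorm_integral_le_lintegral_enorm _)
    _ = ∫⁻ y in symmDiff U V, ‖F y‖ₑ ∂μ :=
        (lintegral_union (hV.diff hU) disjoint_sdiff_sdiff).symm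

theorem enorm_setIntegral_sub_setIntegral_le_add {F H : α → G} (hF : Integrable F μ)
    (hH : Integrable H μ) {U V : Set α} (hU : MeasurableSet U) (hV : MeasurableSet V) :
    ‖∫ y in U, F y ∂μ - ∫ y in V, H y ∂μ‖ₑ ≤
      ∫⁻ y in U, ‖F y - H y‖ₑ ∂μ + ∫⁻ y in symmDiff U V, ‖H y‖ₑ ∂μ := by
  have hsplit : ∫ y in U, F y ∂μ - ∫ y in V, H y ∂μ =
      ∫ y in U, (F y - H y) ∂μ + (∫ y in U, H y ∂μ - ∫ y in V, H y ∂μ) := by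
    rw [integral_sub hF.integrableOn hH.integrableOn, sub_add_sub_cancel]
  rw [hsplit]
  exact (enorm_add_le _ _).trans (add_le_add (enorm_integral_le_lintegral_enorm _)
    (enorm_setIntegral_sub_setIntegral_le hH hU hV))

end Integrals

section Polar

variable {E : Type*} [NormedAddCommGroup E] [NormedSpace ℝ E] [FiniteDimensional ℝ E]
  [Nontrivial E] [MeasurableSpace E] [BorelSpace E] (μ : Measure E) [μ.IsAddHaarMeasure]

theorem lintegral_fun_norm_addHaar {f : ℝ → ℝ≥0∞} (hf : Measurable f) :
    ∫⁻ y, f ‖y‖ ∂μ = Module.finrank ℝ E * μ (Metric.ball 0 1) *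
      ∫⁻ t in Ioi (0 : ℝ), ENNReal.ofReal (t ^ (Module.finrank ℝ E - 1)) * f t := by
  have hfst : Measurable fun t : Ioi (0 : ℝ) ↦ f t := hf.comp measurable_subtype_coe
  calc ∫⁻ y, f ‖y‖ ∂μ = ∫⁻ y : ({0}ᶜ : Set E), f ‖y.1‖ ∂(μ.comap (↑)) := by
        rw [lintegral_subtype_comap (measurableSet_singleton _).compl fun y ↦ f ‖y‖,
          restrict_compl_singleton]
    _ = ∫⁻ p, f p.2 ∂μ.toSphere.prod (.volumeIoiPow (Module.finrank ℝ E - 1)) := by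
        simpa using μ.measurePreserving_homeomorphUnitSphereProd.lintegral_comp
          (hfst.comp measurable_snd)
    _ = μ.toSphere univ * ∫⁻ t : Ioi (0 : ℝ), f t ∂.volumeIoiPow (Module.finrank ℝ E - 1) := by
        simpa using lintegral_prod_mul (μ := μ.toSphere)
          (ν := .volumeIoiPow (Module.finrank ℝ E - 1)) aemeasurable_const
          (f := fun _ ↦ 1) hfst.aemeasurable
    _ = Module.finrank ℝ E * μ (Metric.ball 0 1) *
          ∫⁻ t in Ioi (0 : ℝ), ENNReal.ofReal (t ^ (Module.finrank ℝ E - 1)) * f t := by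
        rw [μ.toSphere_apply_univ, Measure.volumeIoiPow,
          lintegral_withDensity_eq_lintegral_mul _ (by fun_prop) hfst]
        congr 1
        exact lintegral_subtype_comap measurableSet_Ioi
          fun t ↦ ENNReal.ofReal (t ^ (Module.finrank ℝ E - 1)) * f t

theorem setLIntegral_preimage_dist_inv_pow_le (x : E) {s : Set ℝ} (hs : MeasurableSet s) :
    ∫⁻ y in dist x ⁻¹' s, ENNReal.ofReal ((dist x y ^ (Module.finrank ℝ E - 1))⁻¹) ∂μ ≤
      Module.finrank ℝ E * μ (Metric.ball 0 1) * volume s := by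
  set n := Module.finrank ℝ E
  set h : ℝ → ℝ≥0∞ := s.indicator fun t ↦ ENNReal.ofReal ((t ^ (n - 1))⁻¹)
  have hh : Measurable h := Measurable.indicator (by fun_prop) hs
  have hdist : Measurable (dist x) := measurable_const.dist measurable_id
  have hcancel (t : ℝ) (ht : t ∈ Ioi 0) :
      ENNReal.ofReal (t ^ (n - 1)) * h t = s.indicator 1 t := by
    have ht' : 0 < t ^ (n - 1) := pow_pos ht _
    by_cases hts : t ∈ s
    · simp [h, hts, ← ENNReal.ofReal_mul ht'.le, ht'.ne']
    · simp [h, hts]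
  calc ∫⁻ y in dist x ⁻¹' s, ENNReal.ofReal ((dist x y ^ (n - 1))⁻¹) ∂μ
      = ∫⁻ y, h ‖y - x‖ ∂μ := by
        rw [← lintegral_indicator (hdist hs)]
        simp only [← dist_eq_norm, dist_comm _ x]
        rfl
    _ = ∫⁻ y, h ‖y‖ ∂μ := lintegral_sub_right_eq_self (fun y ↦ h ‖y‖) x
    _ = n * μ (Metric.ball 0 1) * ∫⁻ t in Ioi (0 : ℝ), s.indicator 1 t := by
        rw [lintegral_fun_norm_addHaar μ hh, setLIntegral_congr_fun measurableSet_Ioi hcancel]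
    _ ≤ n * μ (Metric.ball 0 1) * volume s := by
        gcongr
        rw [← lintegral_indicator_one hs]
        exact setLIntegral_le_lintegral _ _

end Polar

section Annuli

variable {X : Type*} [PseudoMetricSpace X]

/-- The annulus of points at distance in `(a, b]` from `z`; the increments of the truncations of a
singular integral at `z` are integrals over such sets. -/
def annulus (z : X) (a b : ℝ) : Set X := dist z ⁻¹' Ioc a b

theorem measurableSet_annulus [MeasurableSpace X] [OpensMeasurableSpace X] (z : X) (a b : ℝ) :
    MeasurableSet (annulus z a b) :=
  (continuous_const.dist continuous_id).measurable measurableSet_Ioc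

theorem pairwise_disjoint_annulus (z : X) {ε : ℕ → ℝ} (hε : Antitone ε) :
    Pairwise (Function.onFun Disjoint fun i ↦ annulus z (ε (i + 1)) (ε i)) :=
  fun _ _ hij ↦ (hε.pairwise_disjoint_on_Ioc_succ hij).preimage _

theorem symmDiff_annulus_subset {x ξ : X} {δ : ℝ} (hδ : dist x ξ ≤ δ) (a b : ℝ) :
    symmDiff (annulus ξ a b) (annulus x a b) ⊆
      dist x ⁻¹' (Icc (a - δ) (a + δ) ∪ Icc (b - δ) (b + δ)) := by
  intro y hy
  have hx := dist_triangle x ξ y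
  have hξ := dist_triangle_left ξ y x
  simp only [annulus, mem_symmDiff, mem_preimage, mem_Ioc, mem_union, mem_Icc] at hy ⊢
  grind

end Annuli

section BallGrowth

variable {X : Type*} [PseudoMetricSpace X] [MeasurableSpace X] {μ : Measure X} {d : ℕ} {x : X}
  {G : X → ℝ≥0∞} {B : ℝ≥0∞}

/-- `G` has mass at most `B * R ^ d` in every ball of radius `R` centred at `x`. When balls of
radius `R` have measure comparable to `R ^ d`, the best `B` is comparable to the centred maximal
function of `G` at `x`; the predicate avoids naming that supremum. -/
def BallGrowth (μ : Measure X) (d : ℕ) (x : X) (G : X → ℝ≥0∞) (B : ℝ≥0∞) : Prop :=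
  ∀ R : ℝ, 0 < R → ∫⁻ y in Metric.ball x R, G y ∂μ ≤ B * ENNReal.ofReal (R ^ d)

namespace BallGrowth

theorem mono {H : X → ℝ≥0∞} (hGH : G ≤ H) (h : BallGrowth μ d x H B) : BallGrowth μ d x G B :=
  fun R hR ↦ (lintegral_mono hGH).trans (h R hR)

theorem of_rpow {κ M : ℝ≥0∞} {r : ℝ} (hr : 1 ≤ r) (hG : AEMeasurable G μ)
    (hμ : BallGrowth μ d x (fun _ ↦ 1) κ) (hM : BallGrowth μ d x (fun y ↦ G y ^ r) M) :
    BallGrowth μ d x G (κ ^ (1 - 1 / r) * M ^ (1 / r)) := by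
  intro R hR
  have hr0 : 0 < r := one_pos.trans_le hr
  set V := ENNReal.ofReal (R ^ d)
  have hball : μ (Metric.ball x R) ≤ κ * V := by simpa using hμ R hR
  refine (ENNReal.rpow_le_rpow_iff hr0).1 ?_
  calc (∫⁻ y in Metric.ball x R, G y ∂μ) ^ r
      ≤ (∫⁻ y in Metric.ball x R, G y ^ r ∂μ) * μ (Metric.ball x R) ^ (r - 1) := by
        simpa using lintegral_rpow_le_mul_measure_univ hr (hG.restrict (s := Metric.ball x R))
    _ ≤ M * V * (κ * V) ^ (r - 1) := by
        gcongr
        exact hM R hR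
    _ = κ ^ (r - 1) * M * (V * V ^ (r - 1)) := by
        rw [ENNReal.mul_rpow_of_nonneg _ _ (sub_nonneg.2 hr)]
        ring
    _ = κ ^ (r - 1) * M * V ^ r := by
        nth_rw 1 [← ENNReal.rpow_one V]
        rw [← ENNReal.rpow_add_of_nonneg _ _ zero_le_one (sub_nonneg.2 hr), add_sub_cancel]
    _ = (κ ^ (1 - 1 / r) * M ^ (1 / r) * V) ^ r := by
        rw [ENNReal.mul_rpow_of_nonneg _ _ hr0.le, ENNReal.mul_rpow_of_nonneg _ _ hr0.le,
          ← ENNReal.rpow_mul, ← ENNReal.rpow_mul, one_div_mul_cancel hr0.ne', ENNReal.rpow_one,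
          sub_mul, one_mul, one_div_mul_cancel hr0.ne']

theorem integrable_of_support_subset {g : X → ℝ} (hg : AEStronglyMeasurable g μ) (hB : B ≠ ⊤)
    (h : BallGrowth μ d x (fun y ↦ ‖g y‖ₑ) B) {E : Set X} (hE : Bornology.IsBounded E)
    (hgE : Function.support g ⊆ E) : Integrable g μ := by
  obtain ⟨R, hR, hER⟩ := hE.subset_ball_lt 0 x
  have hsupp : (Function.support fun y ↦ ‖g y‖ₑ) ⊆ Metric.ball x R := fun y hy ↦
    hER (hgE (by simpa using hy))
  refine ⟨hg, ?_⟩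
  rw [HasFiniteIntegral, ← setLIntegral_eq_of_support_subset hsupp]
  exact (h R hR).trans_lt (ENNReal.mul_lt_top hB.lt_top ENNReal.ofReal_lt_top)

variable [OpensMeasurableSpace X]

theorem setLIntegral_dyadic_shell_le (hG : Measurable G) (h : BallGrowth μ d x G B) {R : ℝ}
    (hR : 0 < R) {φ : ℝ → ℝ≥0∞} (hφ : MonotoneOn φ (Ici 0)) (k : ℕ) :
    ∫⁻ y in dist x ⁻¹' Ico (2 ^ k * R) (2 ^ (k + 1) * R),
        G y * (φ (R / dist x y) * ENNReal.ofReal ((dist x y ^ d)⁻¹)) ∂μ ≤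
      B * 2 ^ d * φ ((1 / 2) ^ k) := by
  set T : ℝ := 2 ^ k * R
  have hT : 0 < T := by positivity
  have hTT : 2 ^ (k + 1) * R = 2 * T := by ring
  have hRT : R / T = (1 / 2) ^ k := by simp only [T, one_div, inv_pow]; field_simp
  have hpoint (y : X) (hy : y ∈ dist x ⁻¹' Ico T (2 * T)) :
      G y * (φ (R / dist x y) * ENNReal.ofReal ((dist x y ^ d)⁻¹)) ≤
        G y * (φ ((1 / 2) ^ k) * ENNReal.ofReal ((T ^ d)⁻¹)) := by
    have hTy : T ≤ dist x y := hy.1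
    have hφy : φ (R / dist x y) ≤ φ ((1 / 2) ^ k) :=
      hφ (div_nonneg hR.le dist_nonneg) (mem_Ici.2 (by positivity)) (hRT ▸ by gcongr)
    gcongr
  have hscale : ENNReal.ofReal ((2 * T) ^ d) * ENNReal.ofReal ((T ^ d)⁻¹) = 2 ^ d := by
    rw [← ENNReal.ofReal_mul (by positivity), mul_pow, mul_inv_cancel_right₀ (pow_pos hT d).ne',
      ENNReal.ofReal_pow two_pos.le, ENNReal.ofReal_ofNat]
  rw [hTT]
  calc ∫⁻ y in dist x ⁻¹' Ico T (2 * T),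
        G y * (φ (R / dist x y) * ENNReal.ofReal ((dist x y ^ d)⁻¹)) ∂μ
      ≤ ∫⁻ y in dist x ⁻¹' Ico T (2 * T),
          G y * (φ ((1 / 2) ^ k) * ENNReal.ofReal ((T ^ d)⁻¹)) ∂μ :=
        setLIntegral_mono' ((continuous_const.dist continuous_id).measurable measurableSet_Ico)
          hpoint
    _ ≤ ∫⁻ y in Metric.ball x (2 * T),
          G y * (φ ((1 / 2) ^ k) * ENNReal.ofReal ((T ^ d)⁻¹)) ∂μ :=
        lintegral_mono_set fun y hy ↦ Metric.mem_ball'.2 hy.2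
    _ ≤ B * ENNReal.ofReal ((2 * T) ^ d) * (φ ((1 / 2) ^ k) * ENNReal.ofReal ((T ^ d)⁻¹)) := by
        rw [lintegral_mul_const _ hG]
        gcongr
        exact h _ (by positivity)
    _ = B * 2 ^ d * φ ((1 / 2) ^ k) := by rw [← hscale]; ring

theorem setLIntegral_compl_ball_le (hG : Measurable G) (h : BallGrowth μ d x G B) {R : ℝ}
    (hR : 0 < R) {φ : ℝ → ℝ≥0∞} (hφ : MonotoneOn φ (Ici 0)) :
    ∫⁻ y in (Metric.ball x R)ᶜ,
        G y * (φ (R / dist x y) * ENNReal.ofReal ((dist x y ^ d)⁻¹)) ∂μ ≤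
      B * 2 ^ d * ∑' k : ℕ, φ ((1 / 2) ^ k) := by
  have hcover : (Metric.ball x R)ᶜ ⊆ ⋃ k : ℕ, dist x ⁻¹' Ico (2 ^ k * R) (2 ^ (k + 1) * R) := by
    intro y hy
    have hy' : R ≤ dist x y := by simpa [dist_comm] using hy
    obtain ⟨k, hk, hk'⟩ := exists_nat_pow_near ((one_le_div hR).2 hy') one_lt_two
    exact mem_iUnion.2 ⟨k, (le_div_iff₀ hR).1 hk, (div_lt_iff₀ hR).1 hk'⟩
  calc _ ≤ _ := lintegral_mono_set hcover
    _ ≤ _ := lintegral_iUnion_le _ _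
    _ ≤ ∑' k : ℕ, B * 2 ^ d * φ ((1 / 2) ^ k) :=
        ENNReal.tsum_le_tsum fun k ↦ h.setLIntegral_dyadic_shell_le hG hR hφ k
    _ = _ := ENNReal.tsum_mul_left

end BallGrowth

theorem tsum_half_pow_rpow_ne_top {s : ℝ} (hs : 0 < s) :
    ∑' k : ℕ, ENNReal.ofReal ((1 / 2) ^ k) ^ s ≠ ⊤ := by
  have hgeom (k : ℕ) :
      ENNReal.ofReal ((1 / 2) ^ k) ^ s = (ENNReal.ofReal (1 / 2) ^ s) ^ k := by
    rw [ENNReal.ofReal_pow (by norm_num), ← ENNReal.rpow_natCast, ← ENNReal.rpow_natCast,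
      ← ENNReal.rpow_mul, ← ENNReal.rpow_mul, mul_comm]
  have hlt : ENNReal.ofReal (1 / 2) ^ s < 1 :=
    ENNReal.rpow_lt_one (ENNReal.ofReal_lt_one.2 (by norm_num)) hs
  simp only [hgeom, ENNReal.tsum_geometric]
  exact ENNReal.inv_ne_top.2 (tsub_pos_of_lt hlt).ne'

theorem tsum_half_pow_succ_le_lintegral {φ : ℝ → ℝ≥0∞} (hφ : MonotoneOn φ (Ici 0)) :
    ∑' k : ℕ, φ ((1 / 2) ^ (k + 1)) ≤
      2 * ∫⁻ t in Ioo (0 : ℝ) 1, φ t * ENNReal.ofReal t⁻¹ := by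
  set I : ℕ → Set ℝ := fun k ↦ Ioo ((1 / 2) ^ (k + 1)) ((1 / 2) ^ k)
  have hI : Pairwise (Function.onFun Disjoint I) :=
    (pow_right_anti₀ (by norm_num) (by norm_num) :
      Antitone fun k : ℕ ↦ (1 / 2 : ℝ) ^ k).pairwise_disjoint_on_Ioo_succ
  have hsub : ⋃ k, I k ⊆ Ioo (0 : ℝ) 1 :=
    iUnion_subset fun k ↦ Ioo_subset_Ioo (by positivity) (pow_le_one₀ (by norm_num) (by norm_num))
  have hterm (k : ℕ) :
      φ ((1 / 2) ^ (k + 1)) ≤ 2 * ∫⁻ t in I k, φ t * ENNReal.ofReal t⁻¹ := by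
    have hmass : 2 * (ENNReal.ofReal ((1 / 2) ^ k)⁻¹ * volume (I k)) = 1 := by
      rw [Real.volume_Ioo, ← ENNReal.ofReal_mul (by positivity), ← ENNReal.ofReal_ofNat 2,
        ← ENNReal.ofReal_mul two_pos.le, ENNReal.ofReal_eq_one]
      field_simp
      ring
    calc φ ((1 / 2) ^ (k + 1))
        = 2 * ∫⁻ _ in I k, φ ((1 / 2) ^ (k + 1)) * ENNReal.ofReal ((1 / 2) ^ k)⁻¹ := by
          rw [setLIntegral_const, mul_assoc, mul_left_comm, hmass, mul_one]
      _ ≤ 2 * ∫⁻ t in I k, φ t * ENNReal.ofReal t⁻¹ := by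
          gcongr 2 * ?_
          refine setLIntegral_mono' measurableSet_Ioo fun t ht ↦ ?_
          have ht0 : 0 < t := lt_trans (by positivity) ht.1
          have hφt := hφ (mem_Ici.2 (by positivity)) ht0.le ht.1.le
          have htk := ht.2.le
          gcongr
  calc ∑' k : ℕ, φ ((1 / 2) ^ (k + 1))
      ≤ ∑' k, 2 * ∫⁻ t in I k, φ t * ENNReal.ofReal t⁻¹ := ENNReal.tsum_le_tsum hterm
    _ = 2 * ∫⁻ t in ⋃ k, I k, φ t * ENNReal.ofReal t⁻¹ := by
        rw [ENNReal.tsum_mul_left, lintegral_iUnion (fun _ ↦ measurableSet_Ioo) hI]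
    _ ≤ 2 * ∫⁻ t in Ioo (0 : ℝ) 1, φ t * ENNReal.ofReal t⁻¹ := by gcongr

end BallGrowth

section Cubes

variable {d : ℕ}

theorem dist_le_mul_of_forall_abs_sub_le {x y : Rd d} {t : ℝ} (ht : 0 ≤ t)
    (h : ∀ i, |x i - y i| ≤ t) : dist x y ≤ d * t := by
  rw [EuclideanSpace.dist_eq]
  refine Real.sqrt_le_iff.2 ⟨by positivity, ?_⟩
  have hd : (d : ℝ) ≤ d ^ 2 := mod_cast Nat.le_self_pow two_ne_zero d
  calc ∑ i, dist (x i) (y i) ^ 2 ≤ ∑ _i : Fin d, t ^ 2 := by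
        gcongr with i
        exact h i
    _ = d * t ^ 2 := by simp
    _ ≤ d ^ 2 * t ^ 2 := by gcongr
    _ = (d * t) ^ 2 := (mul_pow _ _ _).symm

namespace Cube

theorem dist_le {Q : Cube d} {x y : Rd d} (hx : x ∈ Q.set) (hy : y ∈ Q.set) :
    dist x y ≤ d * Q.l :=
  dist_le_mul_of_forall_abs_sub_le Q.hl.le fun i ↦ by
    have hxi := hx i
    have hyi := hy i
    grind

theorem measurableSet_dilate (Q : Cube d) (t : ℝ) : MeasurableSet (Q.dilate t) := by
  simp only [dilate, Set.ofPred_forall, Set.ofPred_and]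
  measurability

theorem isBounded_dilate (Q : Cube d) {t : ℝ} (ht : 0 ≤ t) : Bornology.IsBounded (Q.dilate t) :=
  Metric.isBounded_iff.2 ⟨d * (t * Q.l), fun x hx y hy ↦
    dist_le_mul_of_forall_abs_sub_le (mul_nonneg ht Q.hl.le) fun i ↦ by
      have hxi := hx i
      have hyi := hy i
      grind⟩

end Cube

theorem ballGrowth_maxCube (f : Rd d → ℝ) (x : Rd d) :
    BallGrowth volume d x (fun y ↦ ‖f y‖ₑ) (2 ^ d * maxCube f x) := by
  intro R hR
  let Q : Cube d := ⟨x, 2 * R, by positivity⟩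
  have hball : Metric.ball x R ⊆ Q.set := fun y hy i ↦ by
    have hyi : |y i - x i| < R := (PiLp.dist_apply_le y x i).trans_lt hy
    constructor <;> dsimp only [Q] <;> linarith [abs_lt.1 hyi]
  have hvol : Q.vol = 2 ^ d * ENNReal.ofReal (R ^ d) := by
    rw [Cube.vol, mul_pow, ENNReal.ofReal_mul (by positivity), ENNReal.ofReal_pow two_pos.le,
      ENNReal.ofReal_ofNat]
  have hpos : Q.vol ≠ 0 := (ENNReal.ofReal_pos.2 (pow_pos Q.hl d)).ne'
  simp only [Real.enorm_eq_ofReal_abs]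
  calc ∫⁻ y in Metric.ball x R, ENNReal.ofReal |f y|
      ≤ ∫⁻ y in Q.set, ENNReal.ofReal |f y| := lintegral_mono_set hball
    _ = Q.vol * (Q.vol⁻¹ * ∫⁻ y in Q.set, ENNReal.ofReal |f y|) := by
        rw [← mul_assoc, ENNReal.mul_inv_cancel hpos ENNReal.ofReal_ne_top, one_mul]
    _ ≤ Q.vol * maxCube f x := by
        gcongr
        exact le_iSup₂ (f := fun (Q : Cube d) (_ : x ∈ Q.set) ↦
          Q.vol⁻¹ * ∫⁻ y in Q.set, ENNReal.ofReal |f y|) Q (hball (Metric.mem_ball_self hR))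
    _ = 2 ^ d * maxCube f x * ENNReal.ofReal (R ^ d) := by rw [hvol]; ring

theorem ballGrowth_one (x : Rd d) :
    BallGrowth volume d x (fun _ ↦ 1) (volume (Metric.ball (0 : Rd d) 1)) := fun R hR ↦ by
  rw [setLIntegral_one, Measure.addHaar_ball_of_pos _ _ hR, finrank_euclideanSpace_fin, mul_comm]

theorem ballGrowth_rpow_maxCube {r : ℝ} (hr : 0 ≤ r) (g : Rd d → ℝ) (x : Rd d) :
    BallGrowth volume d x (fun y ↦ ‖g y‖ₑ ^ r) (2 ^ d * maxCube (fun y ↦ |g y| ^ r) x) := by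
  have henorm (y : Rd d) : ‖|g y| ^ r‖ₑ = ‖g y‖ₑ ^ r := by
    rw [Real.enorm_rpow_of_nonneg (abs_nonneg _) hr, Real.enorm_abs]
  simpa only [henorm] using ballGrowth_maxCube (fun y ↦ |g y| ^ r) x

end Cubes

section Kernel

theorem ofReal_div_rpow_mul_inv_pow {d : ℕ} (hd : 0 < d) {r : ℝ} (hr : 1 ≤ r) {C R u : ℝ}
    (hC : 0 ≤ C) (hR : 0 ≤ R) (hu : 0 ≤ u) :
    ENNReal.ofReal (C / u) ^ r * ENNReal.ofReal ((u ^ (d - 1))⁻¹) * ENNReal.ofReal R ^ (r - 1) =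
      ENNReal.ofReal C ^ r *
        (ENNReal.ofReal (R / u) ^ (r - 1) * ENNReal.ofReal ((u ^ d)⁻¹)) := by
  have hr1 : 0 ≤ r - 1 := sub_nonneg.2 hr
  have hsplit : ENNReal.ofReal u⁻¹ ^ r = ENNReal.ofReal u⁻¹ ^ (r - 1) * ENNReal.ofReal u⁻¹ := by
    nth_rw 3 [← ENNReal.rpow_one (ENNReal.ofReal u⁻¹)]
    rw [← ENNReal.rpow_add_of_nonneg _ _ hr1 zero_le_one, sub_add_cancel]
  have hpow : ENNReal.ofReal ((u ^ d)⁻¹) =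
      ENNReal.ofReal u⁻¹ * ENNReal.ofReal ((u ^ (d - 1))⁻¹) := by
    rw [← ENNReal.ofReal_mul (inv_nonneg.2 hu), ← mul_inv, mul_pow_sub_one hd.ne']
  rw [div_eq_mul_inv, div_eq_mul_inv, ENNReal.ofReal_mul hC, ENNReal.ofReal_mul hR,
    ENNReal.mul_rpow_of_nonneg _ _ (by positivity), ENNReal.mul_rpow_of_nonneg _ _ hr1, hsplit,
    hpow]
  ring

namespace CZO

variable {d : ℕ} (S : CZO d)

theorem measurable_kernel (x : Rd d) : Measurable (S.K x) :=
  S.measK.comp measurable_prodMk_left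

/-- The Dini integral of the modulus of continuity, discretized to the dyadic scales `2 ^ (-k)`,
`1 ≤ k`. -/
def diniSum : ℝ≥0∞ := ∑' k : ℕ, ENNReal.ofReal (S.ω ((1 / 2) ^ (k + 1)))

theorem diniSum_ne_top : S.diniSum ≠ ⊤ := by
  have hdini : ∫⁻ t in Ioo (0 : ℝ) 1, ENNReal.ofReal (S.ω t) * ENNReal.ofReal t⁻¹ =
      ∫⁻ t in Ioo (0 : ℝ) 1, ENNReal.ofReal (S.ω t / t) :=
    setLIntegral_congr_fun measurableSet_Ioo fun t ht ↦ by
      rw [div_eq_mul_inv, ENNReal.ofReal_mul' (inv_nonneg.2 ht.1.le)]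
  refine ne_top_of_le_ne_top ?_
    (tsum_half_pow_succ_le_lintegral (ENNReal.ofReal_mono.comp_monotoneOn S.ω_mono))
  simp only [Function.comp_apply, hdini]
  exact ENNReal.mul_ne_top ENNReal.ofNat_ne_top S.dini.lintegral_lt_top.ne

variable {x ξ : Rd d} {R : ℝ}

theorem enorm_kernel_sub_le {y : Rd d} (hR : 0 < R) (hξ : dist x ξ ≤ R / 2)
    (hy : R ≤ dist x y) :
    ‖S.K ξ y - S.K x y‖ₑ ≤ ENNReal.ofReal S.Cst * ENNReal.ofReal (S.ω (R / dist x y / 2)) *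
      ENNReal.ofReal ((dist x y ^ d)⁻¹) := by
  have hu : 0 < dist x y := hR.trans_le hy
  have hCst := S.hCst.le
  have hsmooth : |S.K x y - S.K ξ y| ≤ S.Cst * S.ω (dist x ξ / dist x y) / dist x y ^ d :=
    (le_add_of_nonneg_right (abs_nonneg _)).trans
      (S.smooth x ξ y (dist_pos.1 hu) (by linarith))
  have hω : S.ω (dist x ξ / dist x y) ≤ S.ω (R / dist x y / 2) := by
    refine S.ω_mono (mem_Ici.2 (by positivity)) (mem_Ici.2 (by positivity)) ?_
    rw [div_right_comm]
    gcongr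
  rw [enorm_sub_rev, Real.enorm_eq_ofReal_abs, ← ENNReal.ofReal_mul hCst,
    ← ENNReal.ofReal_mul' (by positivity), ← div_eq_mul_inv]
  exact ENNReal.ofReal_le_ofReal (hsmooth.trans (by gcongr))

theorem setLIntegral_mul_enorm_kernel_sub_le {G : Rd d → ℝ≥0∞} {B : ℝ≥0∞} (hG : Measurable G)
    (h : BallGrowth volume d x G B) (hR : 0 < R) (hξ : dist x ξ ≤ R / 2) :
    ∫⁻ y in (Metric.ball x R)ᶜ, G y * ‖S.K ξ y - S.K x y‖ₑ ≤
      B * 2 ^ d * (ENNReal.ofReal S.Cst * S.diniSum) := by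
  set φ : ℝ → ℝ≥0∞ := fun t ↦ ENNReal.ofReal S.Cst * ENNReal.ofReal (S.ω (t / 2))
  have hφ : MonotoneOn φ (Ici 0) := fun s hs t ht hst ↦ by
    have hω : S.ω (s / 2) ≤ S.ω (t / 2) :=
      S.ω_mono (div_nonneg (mem_Ici.1 hs) two_pos.le) (div_nonneg (mem_Ici.1 ht) two_pos.le)
        (by gcongr)
    simp only [φ]
    gcongr
  have hφsum : ∑' k : ℕ, φ ((1 / 2) ^ k) = ENNReal.ofReal S.Cst * S.diniSum := by
    simp only [φ, diniSum, ENNReal.tsum_mul_left, pow_succ, mul_one_div]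
  rw [← hφsum]
  refine (setLIntegral_mono' measurableSet_ball.compl fun y hy ↦ ?_).trans
    (h.setLIntegral_compl_ball_le hG hR hφ)
  gcongr
  exact S.enorm_kernel_sub_le hR hξ (by simpa [dist_comm] using hy)

theorem enorm_kernel_le (hd : 0 < d) {y : Rd d} (hxy : x ≠ y) :
    ‖S.K x y‖ₑ ≤
      ENNReal.ofReal (S.Cst / dist x y) * ENNReal.ofReal ((dist x y ^ (d - 1))⁻¹) := by
  rw [Real.enorm_eq_ofReal_abs, ← ENNReal.ofReal_mul (div_nonneg S.hCst.le dist_nonneg),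
    ← div_eq_mul_inv, div_div, mul_pow_sub_one hd.ne']
  exact ENNReal.ofReal_le_ofReal (S.size x y hxy)

theorem setLIntegral_mul_enorm_kernel_le (hd : 0 < d) (G : Rd d → ℝ≥0∞) (A : Set (Rd d)) :
    ∫⁻ y in A, G y * ‖S.K x y‖ₑ ≤ ∫⁻ y in A, G y * ENNReal.ofReal (S.Cst / dist x y) *
      ENNReal.ofReal ((dist x y ^ (d - 1))⁻¹) := by
  have : Nonempty (Fin d) := ⟨⟨0, hd⟩⟩
  refine lintegral_mono_ae (ae_restrict_of_ae ?_)
  filter_upwards [compl_mem_ae_iff.2 (measure_singleton x)] with y hy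
  rw [mul_assoc]
  gcongr
  exact S.enorm_kernel_le hd (Ne.symm hy)

/-- The constant in the size estimate for the kernel integrated over a thin shell. -/
def thinShellConst (r : ℝ) : ℝ≥0∞ :=
  ENNReal.ofReal S.Cst ^ r * (d * volume (Metric.ball (0 : Rd d) 1) * 2) ^ (r - 1)

theorem thinShellConst_ne_top {r : ℝ} (hr : 1 ≤ r) : S.thinShellConst r ≠ ⊤ := by
  have hball : volume (Metric.ball (0 : Rd d) 1) ≠ ⊤ := measure_ball_lt_top.ne
  refine ENNReal.mul_ne_top (ENNReal.rpow_ne_top_of_nonneg (by positivity) ENNReal.ofReal_ne_top)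
    (ENNReal.rpow_ne_top_of_nonneg (sub_nonneg.2 hr) ?_)
  finiteness

theorem rpow_setLIntegral_mul_enorm_kernel_le (hd : 0 < d) {r : ℝ} (hr : 1 ≤ r)
    {G : Rd d → ℝ≥0∞} (hG : Measurable G) (hR : 0 ≤ R) {A : Set (Rd d)} {s : Set ℝ}
    (hs : MeasurableSet s) (hA : A ⊆ dist x ⁻¹' s) (hsR : volume s ≤ 2 * ENNReal.ofReal R) :
    (∫⁻ y in A, G y * ‖S.K x y‖ₑ) ^ r ≤ S.thinShellConst r *
      ∫⁻ y in A, G y ^ r *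
        (ENNReal.ofReal (R / dist x y) ^ (r - 1) * ENNReal.ofReal ((dist x y ^ d)⁻¹)) := by
  have : Nonempty (Fin d) := ⟨⟨0, hd⟩⟩
  have hr1 : 0 ≤ r - 1 := sub_nonneg.2 hr
  set H : Rd d → ℝ≥0∞ := fun y ↦ G y * ENNReal.ofReal (S.Cst / dist x y)
  set v : Rd d → ℝ≥0∞ := fun y ↦ ENNReal.ofReal ((dist x y ^ (d - 1))⁻¹)
  set c : ℝ≥0∞ := d * volume (Metric.ball (0 : Rd d) 1) * 2
  have hH : Measurable H := by fun_prop
  have hv : Measurable v := by fun_prop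
  have hmass : ∫⁻ y in A, v y ≤ c * ENNReal.ofReal R :=
    calc ∫⁻ y in A, v y ≤ ∫⁻ y in dist x ⁻¹' s, v y := lintegral_mono_set hA
      _ ≤ d * volume (Metric.ball (0 : Rd d) 1) * volume s := by
          simpa [v] using setLIntegral_preimage_dist_inv_pow_le volume x hs
      _ ≤ c * ENNReal.ofReal R := by
          rw [mul_assoc _ 2]
          gcongr
  calc (∫⁻ y in A, G y * ‖S.K x y‖ₑ) ^ r
      ≤ (∫⁻ y in A, H y * v y) ^ r := by
        gcongr ?_ ^ r
        exact S.setLIntegral_mul_enorm_kernel_le hd G A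
    _ ≤ (∫⁻ y in A, H y ^ r * v y) * (∫⁻ y in A, v y) ^ (r - 1) :=
        lintegral_mul_rpow_le hr hH hv
    _ ≤ (∫⁻ y in A, H y ^ r * v y) * (c * ENNReal.ofReal R) ^ (r - 1) := by gcongr
    _ = ∫⁻ y in A, c ^ (r - 1) * (H y ^ r * v y * ENNReal.ofReal R ^ (r - 1)) := by
        rw [lintegral_const_mul _ (by fun_prop), lintegral_mul_const _ (by fun_prop),
          ENNReal.mul_rpow_of_nonneg _ _ hr1, mul_left_comm]
    _ = _ := by
        rw [← lintegral_const_mul _ (by fun_prop)]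
        congr! 2 with y
        rw [thinShellConst, ENNReal.mul_rpow_of_nonneg (G y) _ (by positivity),
          mul_assoc (G y ^ r), mul_assoc (G y ^ r),
          ofReal_div_rpow_mul_inv_pow hd hr S.hCst.le hR dist_nonneg]
        ring

variable {ε : ℕ → ℝ}

theorem tsum_setLIntegral_annulus_mul_enorm_kernel_sub_le {G : Rd d → ℝ≥0∞} {B : ℝ≥0∞}
    (hG : Measurable G) (hG0 : Function.support G ⊆ (Metric.ball x R)ᶜ)
    (h : BallGrowth volume d x G B) (hR : 0 < R) (hξ : dist x ξ ≤ R / 2) (hε : Antitone ε) :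
    ∑' i, ∫⁻ y in annulus ξ (ε (i + 1)) (ε i), G y * ‖S.K ξ y - S.K x y‖ₑ ≤
      B * 2 ^ d * (ENNReal.ofReal S.Cst * S.diniSum) :=
  calc ∑' i, ∫⁻ y in annulus ξ (ε (i + 1)) (ε i), G y * ‖S.K ξ y - S.K x y‖ₑ
      ≤ ∫⁻ y, G y * ‖S.K ξ y - S.K x y‖ₑ :=
        tsum_setLIntegral_le_lintegral (fun _ ↦ measurableSet_annulus _ _ _)
          (pairwise_disjoint_annulus ξ hε) _
    _ = ∫⁻ y in (Metric.ball x R)ᶜ, G y * ‖S.K ξ y - S.K x y‖ₑ :=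
        (setLIntegral_eq_of_support_subset
          ((Function.support_mul_subset_left _ _).trans hG0)).symm
    _ ≤ B * 2 ^ d * (ENNReal.ofReal S.Cst * S.diniSum) :=
        S.setLIntegral_mul_enorm_kernel_sub_le hG h hR hξ

theorem tsum_setLIntegral_symmDiff_annulus_mul_enorm_kernel_rpow_le (hd : 0 < d) {r : ℝ}
    (hr : 1 ≤ r) {G : Rd d → ℝ≥0∞} {B : ℝ≥0∞} (hG : Measurable G)
    (hG0 : Function.support G ⊆ (Metric.ball x R)ᶜ)
    (h : BallGrowth volume d x (fun y ↦ G y ^ r) B) (hR : 0 < R) (hξ : dist x ξ ≤ R / 2)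
    (hε : Antitone ε) :
    ∑' i, (∫⁻ y in symmDiff (annulus ξ (ε (i + 1)) (ε i)) (annulus x (ε (i + 1)) (ε i)),
        G y * ‖S.K x y‖ₑ) ^ r ≤
      S.thinShellConst r *
        (2 * (B * 2 ^ d * ∑' k : ℕ, ENNReal.ofReal ((1 / 2) ^ k) ^ (r - 1))) := by
  set F : Rd d → ℝ≥0∞ := fun y ↦ G y ^ r *
    (ENNReal.ofReal (R / dist x y) ^ (r - 1) * ENNReal.ofReal ((dist x y ^ d)⁻¹))
  have hF0 : Function.support F ⊆ (Metric.ball x R)ᶜ := fun y hy ↦ hG0 fun hGy ↦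
    hy (by simp only [F, hGy, ENNReal.zero_rpow_of_pos (one_pos.trans_le hr), zero_mul])
  have hφ : MonotoneOn (fun t ↦ ENNReal.ofReal t ^ (r - 1)) (Ici 0) := fun s _ t _ hst ↦
    ENNReal.rpow_le_rpow (ENNReal.ofReal_le_ofReal hst) (sub_nonneg.2 hr)
  have hthin (a b : ℝ) :
      volume (Icc (a - R / 2) (a + R / 2) ∪ Icc (b - R / 2) (b + R / 2)) ≤
        2 * ENNReal.ofReal R := by
    refine (measure_union_le _ _).trans_eq ?_
    simp only [Real.volume_Icc, add_sub_sub_cancel, add_halves, two_mul]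
  calc _ ≤ ∑' i, S.thinShellConst r *
          ∫⁻ y in symmDiff (annulus ξ (ε (i + 1)) (ε i)) (annulus x (ε (i + 1)) (ε i)), F y :=
        ENNReal.tsum_le_tsum fun i ↦ S.rpow_setLIntegral_mul_enorm_kernel_le hd hr hG hR.le
          (measurableSet_Icc.union measurableSet_Icc) (symmDiff_annulus_subset hξ _ _) (hthin _ _)
    _ ≤ S.thinShellConst r * (2 * ∫⁻ y, F y) := by
        rw [ENNReal.tsum_mul_left]
        gcongr
        exact tsum_setLIntegral_symmDiff_le (fun _ ↦ measurableSet_annulus _ _ _)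
          (pairwise_disjoint_annulus ξ hε) (fun _ ↦ measurableSet_annulus _ _ _)
          (pairwise_disjoint_annulus x hε) F
    _ ≤ _ := by
        rw [← setLIntegral_eq_of_support_subset hF0]
        gcongr
        exact h.setLIntegral_compl_ball_le (hG.pow_const r) hR hφ

end CZO

end Kernel

section Variation

namespace CZO

variable {d : ℕ} (S : CZO d) {g : Rd d → ℝ} {x ξ : Rd d} {R : ℝ} {ε : ℕ → ℝ}

/-- The `i`-th increment `T_{ε_{i+1}} g(z) - T_{ε_i} g(z)` of the truncations along the radii
`ε`. -/
def increment (ε : ℕ → ℝ) (g : Rd d → ℝ) (z : Rd d) (i : ℕ) : ℝ :=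
  S.trunc (ε (i + 1)) g z - S.trunc (ε i) g z

theorem increment_eq_setIntegral_annulus {z : Rd d} (hi : Integrable fun y ↦ S.K z y * g y)
    (hε : Antitone ε) (i : ℕ) :
    S.increment ε g z i = ∫ y in annulus z (ε (i + 1)) (ε i), S.K z y * g y := by
  have hmeas : MeasurableSet {y | ε i < dist z y} :=
    measurableSet_lt measurable_const (measurable_const.dist measurable_id)
  have hsub : {y | ε i < dist z y} ⊆ {y | ε (i + 1) < dist z y} :=
    fun _ hy ↦ (hε i.le_succ).trans_lt hy
  have hannulus : annulus z (ε (i + 1)) (ε i) =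
      {y | ε (i + 1) < dist z y} \ {y | ε i < dist z y} := by
    ext y
    simp [annulus]
  rw [hannulus, setIntegral_sdiff hmeas hi.integrableOn hsub]
  rfl

theorem integrable_kernel_mul (hg : Integrable g) (hR : 0 < R)
    (hg0 : Function.support g ⊆ (Metric.ball x R)ᶜ) : Integrable fun y ↦ S.K x y * g y := by
  have hCst := S.hCst.le
  refine (hg.norm.const_mul (S.Cst / R ^ d)).mono'
    ((S.measurable_kernel x).aestronglyMeasurable.mul hg.aestronglyMeasurable)
    (Eventually.of_forall fun y ↦ ?_)
  by_cases hgy : g y = 0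
  · simp [hgy]
  have hy : R ≤ dist x y := by simpa [dist_comm] using hg0 hgy
  rw [norm_mul]
  gcongr
  calc ‖S.K x y‖ ≤ S.Cst / dist x y ^ d := S.size x y (dist_pos.1 (hR.trans_le hy))
    _ ≤ S.Cst / R ^ d := by gcongr

theorem enorm_increment_sub_increment_le (hg : Integrable g) (hR : 0 < R)
    (hg0 : Function.support g ⊆ (Metric.ball x R)ᶜ) (hξ : dist x ξ ≤ R / 2) (hε : Antitone ε)
    (i : ℕ) :
    ‖S.increment ε g ξ i - S.increment ε g x i‖ₑ ≤
      (∫⁻ y in annulus ξ (ε (i + 1)) (ε i), ‖g y‖ₑ * ‖S.K ξ y - S.K x y‖ₑ) +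
        ∫⁻ y in symmDiff (annulus ξ (ε (i + 1)) (ε i)) (annulus x (ε (i + 1)) (ε i)),
          ‖g y‖ₑ * ‖S.K x y‖ₑ := by
  have hball : Metric.ball ξ (R / 2) ⊆ Metric.ball x R :=
    Metric.ball_subset_ball' (by rw [dist_comm]; linarith)
  have hix := S.integrable_kernel_mul hg hR hg0
  have hiξ := S.integrable_kernel_mul hg (half_pos hR) (hg0.trans (compl_subset_compl.2 hball))
  rw [S.increment_eq_setIntegral_annulus hiξ hε, S.increment_eq_setIntegral_annulus hix hε]
  simpa only [← sub_mul, enorm_mul, mul_comm ‖g _‖ₑ] using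
    enorm_setIntegral_sub_setIntegral_le_add hiξ hix (measurableSet_annulus _ _ _)
      (measurableSet_annulus _ _ _)

/-- The constant in the `ℓ^ρ` oscillation estimate for the increments: the first summand comes from
the smoothness of the kernel, the second from its size. -/
def oscConst (r : ℝ) : ℝ≥0∞ :=
  volume (Metric.ball (0 : Rd d) 1) ^ (1 - 1 / r) * 2 ^ d * (ENNReal.ofReal S.Cst * S.diniSum) +
    (S.thinShellConst r * 2 * 2 ^ d * ∑' k : ℕ, ENNReal.ofReal ((1 / 2) ^ k) ^ (r - 1)) ^ (1 / r)

theorem oscConst_ne_top {r : ℝ} (hr : 1 < r) : S.oscConst r ≠ ⊤ := by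
  have hr0 : 0 ≤ 1 / r := by positivity
  have hr1 : 0 ≤ 1 - 1 / r := sub_nonneg.2 ((div_le_one (by positivity)).2 hr.le)
  have hball : volume (Metric.ball (0 : Rd d) 1) ≠ ⊤ := measure_ball_lt_top.ne
  have hdini := S.diniSum_ne_top
  have hthin := S.thinShellConst_ne_top hr.le
  have hgeom := tsum_half_pow_rpow_ne_top (sub_pos.2 hr)
  unfold oscConst
  finiteness

theorem tsum_enorm_increment_sub_increment_rpow_le (hd : 0 < d) {r ρ : ℝ} (hr : 1 ≤ r)
    (hrρ : r ≤ ρ) (hgm : Measurable g) (hg : Integrable g) (hR : 0 < R)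
    (hg0 : Function.support g ⊆ (Metric.ball x R)ᶜ) (hξ : dist x ξ ≤ R / 2) {B : ℝ≥0∞}
    (hB : BallGrowth volume d x (fun y ↦ ‖g y‖ₑ ^ r) B) (hε : Antitone ε) :
    (∑' i, ‖S.increment ε g ξ i - S.increment ε g x i‖ₑ ^ ρ) ^ (1 / ρ) ≤
      S.oscConst r * B ^ (1 / r) := by
  have hr0 : 0 < r := one_pos.trans_le hr
  have hρ : 1 ≤ ρ := hr.trans hrρ
  have hsupp : (Function.support fun y ↦ ‖g y‖ₑ) ⊆ (Metric.ball x R)ᶜ := fun y hy ↦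
    hg0 (by simpa using hy)
  set a : ℕ → ℝ≥0∞ := fun i ↦
    ∫⁻ y in annulus ξ (ε (i + 1)) (ε i), ‖g y‖ₑ * ‖S.K ξ y - S.K x y‖ₑ
  set b : ℕ → ℝ≥0∞ := fun i ↦
    ∫⁻ y in symmDiff (annulus ξ (ε (i + 1)) (ε i)) (annulus x (ε (i + 1)) (ε i)),
      ‖g y‖ₑ * ‖S.K x y‖ₑ
  have ha := S.tsum_setLIntegral_annulus_mul_enorm_kernel_sub_le hgm.enorm hsupp
    (.of_rpow hr hgm.enorm.aemeasurable (ballGrowth_one x) hB) hR hξ hε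
  have hb := S.tsum_setLIntegral_symmDiff_annulus_mul_enorm_kernel_rpow_le hd hr hgm.enorm hsupp
    hB hR hξ hε
  calc (∑' i, ‖S.increment ε g ξ i - S.increment ε g x i‖ₑ ^ ρ) ^ (1 / ρ)
      ≤ (∑' i, (a i + b i) ^ ρ) ^ (1 / ρ) := by
        gcongr with i
        exact S.enorm_increment_sub_increment_le hg hR hg0 hξ hε i
    _ ≤ (∑' i, a i ^ ρ) ^ (1 / ρ) + (∑' i, b i ^ ρ) ^ (1 / ρ) := tsum_add_rpow_le hρ a b
    _ ≤ ∑' i, a i + (∑' i, b i ^ r) ^ (1 / r) := by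
        gcongr
        · simpa using tsum_rpow_rpow_antitone one_pos hρ a
        · exact tsum_rpow_rpow_antitone hr0 hrρ b
    _ ≤ _ := add_le_add ha (ENNReal.rpow_le_rpow hb (by positivity))
    _ = S.oscConst r * B ^ (1 / r) := by
        rw [oscConst, add_mul, ← ENNReal.mul_rpow_of_nonneg _ _ (by positivity)]
        congr 1
        · ring
        · congr 1
          ring

theorem var_le_var_add {ρ : ℝ} (hρ : 1 ≤ ρ) {z w : Rd d} {D : ℝ≥0∞}
    (h : ∀ ε : ℕ → ℝ, Antitone ε →
      (∑' i, ‖S.increment ε g z i - S.increment ε g w i‖ₑ ^ ρ) ^ (1 / ρ) ≤ D) :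
    S.var ρ g z ≤ S.var ρ g w + D := by
  refine iSup₂_le fun ε hε ↦ ?_
  have hw : (∑' i, ‖S.increment ε g w i‖ₑ ^ ρ) ^ (1 / ρ) ≤ S.var ρ g w := by
    simp only [Real.enorm_eq_ofReal_abs]
    exact le_iSup₂ (f := fun (ε : ℕ → ℝ)
      (_ : StrictAnti ε ∧ (∀ i, 0 < ε i) ∧ Tendsto ε atTop (nhds 0)) ↦
        (∑' i, ENNReal.ofReal |S.increment ε g w i| ^ ρ) ^ (1 / ρ)) ε hε
  simp only [← Real.enorm_eq_ofReal_abs]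
  calc (∑' i, ‖S.increment ε g z i‖ₑ ^ ρ) ^ (1 / ρ)
      ≤ (∑' i, (‖S.increment ε g w i‖ₑ + ‖S.increment ε g z i - S.increment ε g w i‖ₑ) ^ ρ) ^
          (1 / ρ) := by
        gcongr with i
        simpa using enorm_add_le (S.increment ε g w i)
          (S.increment ε g z i - S.increment ε g w i)
    _ ≤ _ := tsum_add_rpow_le hρ _ _
    _ ≤ S.var ρ g w + D := add_le_add hw (h ε hε.1.antitone)

theorem var_oscillation_le (hd : 0 < d) {r ρ : ℝ} (hr : 1 ≤ r) (hrρ : r ≤ ρ)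
    (hgm : Measurable g) (hg : Integrable g) (hR : 0 < R)
    (hg0 : Function.support g ⊆ (Metric.ball x R)ᶜ) (hξ : dist x ξ ≤ R / 2) {B : ℝ≥0∞}
    (hB : BallGrowth volume d x (fun y ↦ ‖g y‖ₑ ^ r) B) :
    S.var ρ g ξ ≤ S.var ρ g x + S.oscConst r * B ^ (1 / r) ∧
      S.var ρ g x ≤ S.var ρ g ξ + S.oscConst r * B ^ (1 / r) := by
  have hosc (ε : ℕ → ℝ) (hε : Antitone ε) :=
    S.tsum_enorm_increment_sub_increment_rpow_le hd hr hrρ hgm hg hR hg0 hξ hB hε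
  exact ⟨S.var_le_var_add (hr.trans hrρ) hosc,
    S.var_le_var_add (hr.trans hrρ) fun ε hε ↦ by simpa only [enorm_sub_rev] using hosc ε hε⟩

theorem var_indicator_oscillation_le (hd : 0 < d) {r ρ : ℝ} (hr : 1 ≤ r) (hrρ : r ≤ ρ)
    {E : Set (Rd d)} (hE : MeasurableSet E) (hEb : Bornology.IsBounded E) (hR : 0 < R)
    (hξ : dist x ξ ≤ R / 2) {f : Rd d → ℝ} (hf : Measurable f)
    (hM : maxCube (fun y ↦ |f y| ^ r) x ≠ ⊤) :
    S.var ρ ((E \ Metric.ball x R).indicator f) ξ ≤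
        S.var ρ ((E \ Metric.ball x R).indicator f) x +
          S.oscConst r * (2 ^ d * maxCube (fun y ↦ |f y| ^ r) x) ^ (1 / r) ∧
      S.var ρ ((E \ Metric.ball x R).indicator f) x ≤
        S.var ρ ((E \ Metric.ball x R).indicator f) ξ +
          S.oscConst r * (2 ^ d * maxCube (fun y ↦ |f y| ^ r) x) ^ (1 / r) := by
  set g : Rd d → ℝ := (E \ Metric.ball x R).indicator f
  have hgm : Measurable g := hf.indicator (hE.diff measurableSet_ball)
  have hB : BallGrowth volume d x (fun y ↦ ‖g y‖ₑ ^ r)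
      (2 ^ d * maxCube (fun y ↦ |f y| ^ r) x) := by
    refine (ballGrowth_rpow_maxCube (by positivity) f x).mono fun y ↦ ?_
    exact ENNReal.rpow_le_rpow (enorm_indicator_le_enorm_self f y) (by positivity)
  have hg1 := BallGrowth.of_rpow hr hgm.enorm.aemeasurable (ballGrowth_one x) hB
  have hsupp : Function.support g ⊆ E \ Metric.ball x R := support_indicator_subset
  have hr1 : 0 ≤ 1 - 1 / r := sub_nonneg.2 ((div_le_one (by positivity)).2 hr)
  have hg : Integrable g := by
    refine hg1.integrable_of_support_subset hgm.aestronglyMeasurable ?_ hEb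
      (hsupp.trans sdiff_subset)
    have hball : volume (Metric.ball (0 : Rd d) 1) ≠ ⊤ := measure_ball_lt_top.ne
    finiteness
  exact S.var_oscillation_le hd hr hrρ hgm hg hR (hsupp.trans (sdiff_subset_compl _ _)) hξ hB

end CZO

end Variation

theorem variation_oscillation_bound_general {d : ℕ} (hd : 0 < d) (S : CZO d) {r ρ : ℝ}
    (hr : 1 < r) (hrρ : r ≤ ρ) :
    ∃ C : ℝ, 0 < C ∧ ∀ E : Set (Rd d), MeasurableSet E → Bornology.IsBounded E →
      ∀ (x ξ : Rd d) (R : ℝ), 0 < R → dist x ξ ≤ R / 2 → ∀ f : Rd d → ℝ, Measurable f →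
      (S.var ρ ((E \ Metric.ball x R).indicator f) ξ ≤
          S.var ρ ((E \ Metric.ball x R).indicator f) x +
            ENNReal.ofReal C * maxCube (fun y ↦ |f y| ^ r) x ^ (1 / r)) ∧
      (S.var ρ ((E \ Metric.ball x R).indicator f) x ≤
          S.var ρ ((E \ Metric.ball x R).indicator f) ξ +
            ENNReal.ofReal C * maxCube (fun y ↦ |f y| ^ r) x ^ (1 / r)) := by
  have hr0 : 0 < 1 / r := by positivity
  set D : ℝ≥0∞ := S.oscConst r * (2 ^ d) ^ (1 / r)
  have hD : D ≠ ⊤ := by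
    have hosc := S.oscConst_ne_top hr
    finiteness
  refine ⟨D.toReal + 1, by positivity, fun E hE hEb x ξ R hR hξ f hf ↦ ?_⟩
  rcases eq_or_ne (maxCube (fun y ↦ |f y| ^ r) x) ⊤ with hM | hM
  · have hC : ENNReal.ofReal (D.toReal + 1) ≠ 0 := (ENNReal.ofReal_pos.2 (by positivity)).ne'
    simp only [hM, ENNReal.top_rpow_of_pos hr0, ENNReal.mul_top hC, add_top, le_top, and_self]
  · have hDC : D ≤ ENNReal.ofReal (D.toReal + 1) :=
      (ENNReal.le_ofReal_iff_toReal_le hD (by positivity)).2 (by linarith)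
    have hosc := S.var_indicator_oscillation_le hd hr.le hrρ hE hEb hR hξ hf hM
    rw [ENNReal.mul_rpow_of_nonneg _ _ hr0.le, ← mul_assoc] at hosc
    exact ⟨hosc.1.trans (by gcongr), hosc.2.trans (by gcongr)⟩

/-- Oscillation estimate for the variation of the truncation of `f` outside
`B_x = B(x, 9d·ℓ(Q))`, in terms of the Hardy–Littlewood maximal function. -/
theorem variation_oscillation_bound
    (d : ℕ) (hd : 0 < d) (S : CZO d) (ρ q : ℝ) (hρ : 2 < ρ) (hq : 1 < q)
    (hbdd : S.VarBdd ρ q) (r : ℝ) (hr : 1 < r) (hrq : r < q) (hrρ : r < ρ) :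
    ∃ C : ℝ, 0 < C ∧ ∀ (Q₀ Q : Cube d) (x : Rd d), x ∈ Q₀.set → x ∈ Q.set →
      Q.set ⊆ Q₀.set → ∀ ξ ∈ Q.set, ∀ f : Rd d → ℝ, Measurable f →
      (∫⁻ y, ENNReal.ofReal |f y| ^ q ∂volume) ≠ ⊤ →
      (S.var ρ ((Q₀.dilate 3 \ Metric.ball x (9 * (d : ℝ) * Q.l)).indicator f) ξ ≤
          S.var ρ ((Q₀.dilate 3 \ Metric.ball x (9 * (d : ℝ) * Q.l)).indicator f) x +
            ENNReal.ofReal C * maxCube (fun y => |f y| ^ r) x ^ (1 / r)) ∧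
      (S.var ρ ((Q₀.dilate 3 \ Metric.ball x (9 * (d : ℝ) * Q.l)).indicator f) x ≤
          S.var ρ ((Q₀.dilate 3 \ Metric.ball x (9 * (d : ℝ) * Q.l)).indicator f) ξ +
            ENNReal.ofReal C * maxCube (fun y => |f y| ^ r) x ^ (1 / r)) := by
  obtain ⟨C, hC, hosc⟩ := variation_oscillation_bound_general hd S hr hrρ.le
  refine ⟨C, hC, fun Q₀ Q x _ hx _ ξ hξ f hf _ ↦ ?_⟩
  have hl : 0 < d * Q.l := mul_pos (Nat.cast_pos.2 hd) Q.hl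
  exact hosc _ (Q₀.measurableSet_dilate 3) (Q₀.isBounded_dilate zero_le_three) x ξ _
    (by linarith) (by linarith [Cube.dist_le hx hξ]) f hf
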